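/- (Lemma 2.2) Let φ be a holomorphic ℂ*-action on ℂⁿ fixing p, let ψ_p be the linearized action of φ at p, and let F_p : ℂⁿ → ℂⁿ be a holomorphic map satisfying ψ_p^z ∘ F_p = F_p ∘ φ^z for all z ∈ ℂ*, F_p(p) = 0 and DF_p(p) = Id. Suppose U ∋ p is an open set in ℂⁿ and V = F_p(U) is open, such that (1) F_p is injective on U, and (2) ψ_p^z(V) ∩ V is connected for each z ∈ ℂ*. Then F_p is injective on the saturation Sat(U,φ) of U by the orbits of φ. -/

import Mathlib

/-!
The map `F` is open on every open set on which it is injective. Its Jacobian determinant does not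
vanish identically near any point, since it is nonzero at `p`. Transport the Jacobian to the target
through the inverse of `F` on a small closed ball `S` around `x`, and extend it by zero. Away from
`F '' frontier S` this function is continuous, and it is holomorphic wherever it is nonzero. By a
weak form of Radó's theorem, such a function vanishes on any ball about whose centre it vanishes
locally. If `F '' S` were not a neighbourhood of `F x`, the transported Jacobian would therefore
vanish near `F x`, and so would the Jacobian near `x`.

Suppose now that `F x = F y` with `φ a x` and `φ b y` in `U`. Then `φ b x` lies in the translate of
`U` by `c = b * a⁻¹`, on which `F` is injective by equivariance. Hence `F` has open inverses on
`ψ c '' V` and on `V = F '' U`; they agree near `F p`, and so on the whole preconnected overlap.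
-/

open Filter Function Metric Set Topology

section WeakRado

variable {E F : Type*} [NormedAddCommGroup E] [NormedSpace ℂ E]
  [NormedAddCommGroup F] [NormedSpace ℂ F]

lemma norm_le_of_forall_mem_frontier_norm_le_of_ne_zero [Nontrivial E]
    {g : E → F} {s : Set E} {M : ℝ} (hs : Bornology.IsBounded s) (hs_open : IsOpen s)
    (hc : ContinuousOn g (closure s)) (hd : ∀ x ∈ s, g x ≠ 0 → DifferentiableAt ℂ g x)
    (hM₀ : 0 ≤ M) (hM : ∀ x ∈ frontier s, ‖g x‖ ≤ M) {x : E} (hx : x ∈ s) : ‖g x‖ ≤ M := by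
  rcases eq_or_ne (g x) 0 with hgx | hgx
  · rwa [hgx, norm_zero]
  have hopen : IsOpen (s ∩ g ⁻¹' {0}ᶜ) :=
    (hc.mono subset_closure).isOpen_inter_preimage hs_open isOpen_compl_singleton
  have hclosure : closure (s ∩ g ⁻¹' {0}ᶜ) ⊆ closure s := closure_mono inter_subset_left
  have hfrontier : ∀ z ∈ frontier (s ∩ g ⁻¹' {0}ᶜ), ‖g z‖ ≤ M := by
    rw [hopen.frontier_eq]
    rintro z ⟨hz, hz_notMem⟩
    rcases eq_or_ne (g z) 0 with hgz | hgz
    · rwa [hgz, norm_zero]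
    · exact hM z (hs_open.frontier_eq ▸ ⟨hclosure hz, fun hzs => hz_notMem ⟨hzs, hgz⟩⟩)
  exact Complex.norm_le_of_forall_mem_frontier_norm_le (hs.subset inter_subset_left)
    ⟨fun z hz => (hd z hz.1 hz.2).differentiableWithinAt, hc.mono hclosure⟩ hfrontier
    (subset_closure ⟨hx, hgx⟩)

-- The quotient of `k` by `(z - c) ^ m` is still continuous at `c`, so the maximum principle
-- applies to it for every `m`.
lemma norm_le_pow_mul_of_eventually_eq_zero {k : ℂ → F} {c w : ℂ} {ρ M : ℝ}
    (hc : ContinuousOn k (closedBall c ρ))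
    (hd : ∀ z ∈ ball c ρ, k z ≠ 0 → DifferentiableAt ℂ k z)
    (h0 : ∀ᶠ z in 𝓝 c, k z = 0) (hM : ∀ z ∈ closedBall c ρ, ‖k z‖ ≤ M)
    (hw : w ∈ ball c ρ) (m : ℕ) : ‖k w‖ ≤ (dist w c / ρ) ^ m * M := by
  have hρ : 0 < ρ := pos_of_mem_ball hw
  have hM₀ : 0 ≤ M := (norm_nonneg _).trans (hM w (ball_subset_closedBall hw))
  rcases eq_or_ne w c with rfl | hwc
  · rw [h0.self_of_nhds, norm_zero]
    positivity
  have hquot_cont : ContinuousOn (fun z => ((z - c) ^ m)⁻¹ • k z) (closedBall c ρ) := by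
    intro z hz
    rcases eq_or_ne z c with rfl | hzc
    · refine (continuousAt_const (y := (0 : F)).congr ?_).continuousWithinAt
      filter_upwards [h0] with y hy
      rw [hy, smul_zero]
    · have hpow : (z - c) ^ m ≠ 0 := pow_ne_zero m (sub_ne_zero.2 hzc)
      exact ContinuousWithinAt.smul (by fun_prop (disch := assumption)) (hc z hz)
  have hquot_diff : ∀ z ∈ ball c ρ, ((z - c) ^ m)⁻¹ • k z ≠ 0 →
      DifferentiableAt ℂ (fun z => ((z - c) ^ m)⁻¹ • k z) z := by
    intro z hz hne
    have hpow : (z - c) ^ m ≠ 0 := inv_eq_zero.not.1 (left_ne_zero_of_smul hne)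
    exact DifferentiableAt.smul (by fun_prop (disch := assumption))
      (hd z hz (right_ne_zero_of_smul hne))
  have hsphere : ∀ z ∈ sphere c ρ, ‖((z - c) ^ m)⁻¹ • k z‖ ≤ (ρ ^ m)⁻¹ * M := by
    intro z hz
    rw [norm_smul, norm_inv, norm_pow, mem_sphere_iff_norm.1 hz]
    gcongr
    exact hM z (sphere_subset_closedBall hz)
  have hmax := norm_le_of_forall_mem_frontier_norm_le_of_ne_zero
    isBounded_ball isOpen_ball (closure_ball c hρ.ne' ▸ hquot_cont) hquot_diff (by positivity)
    (frontier_ball c hρ.ne' ▸ hsphere) hw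
  have hpos : 0 < ‖w - c‖ ^ m := pow_pos (norm_sub_pos_iff.2 hwc) m
  rw [norm_smul, norm_inv, norm_pow, inv_mul_le_iff₀ hpos] at hmax
  rwa [dist_eq_norm, div_pow, div_eq_mul_inv, mul_assoc]

lemma eqOn_zero_ball_of_eventually_eq_zero_of_complex {k : ℂ → F} {c : ℂ} {r : ℝ}
    (hc : ContinuousOn k (ball c r))
    (hd : ∀ z ∈ ball c r, k z ≠ 0 → DifferentiableAt ℂ k z)
    (h0 : ∀ᶠ z in 𝓝 c, k z = 0) : EqOn k 0 (ball c r) := by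
  intro w hw
  obtain ⟨ρ, hwρ, hρr⟩ := exists_between (mem_ball.1 hw)
  have hc' := hc.mono (closedBall_subset_ball hρr)
  obtain ⟨M, hM⟩ := (isCompact_closedBall c ρ).exists_bound_of_continuousOn hc'
  have hbound := norm_le_pow_mul_of_eventually_eq_zero hc'
    (fun z hz => hd z (ball_subset_ball hρr.le hz)) h0 hM hwρ
  have hratio : dist w c / ρ < 1 := (div_lt_one (dist_nonneg.trans_lt hwρ)).2 hwρ
  have hratio0 : 0 ≤ dist w c / ρ := div_nonneg dist_nonneg (dist_nonneg.trans hwρ.le)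
  have hlim : Tendsto (fun m : ℕ => (dist w c / ρ) ^ m * M) atTop (𝓝 0) := by
    simpa only [zero_mul] using
      (tendsto_pow_atTop_nhds_zero_of_lt_one hratio0 hratio).mul_const M
  exact norm_le_zero_iff.1 (ge_of_tendsto' hlim hbound)

lemma eqOn_zero_ball_of_eventually_eq_zero {k : E → F} {a : E} {r : ℝ}
    (hc : ContinuousOn k (ball a r))
    (hd : ∀ x ∈ ball a r, k x ≠ 0 → DifferentiableAt ℂ k x)
    (h0 : ∀ᶠ x in 𝓝 a, k x = 0) : EqOn k 0 (ball a r) := by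
  intro w hw
  rcases eq_or_ne w a with rfl | hwa
  · exact h0.self_of_nhds
  let line : ℂ → E := fun ζ => a + ζ • (w - a)
  have hnorm : 0 < ‖w - a‖ := norm_sub_pos_iff.2 hwa
  have hline : MapsTo line (ball 0 (r / ‖w - a‖)) (ball a r) := by
    intro ζ hζ
    rw [mem_ball_zero_iff, lt_div_iff₀ hnorm] at hζ
    simpa only [line, mem_ball_iff_norm, add_sub_cancel_left, norm_smul] using hζ
  have hline0 : Tendsto line (𝓝 0) (𝓝 a) := by
    simpa only [line, zero_smul, add_zero] using
      (by fun_prop : Continuous line).tendsto 0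
  have h1 : (1 : ℂ) ∈ ball 0 (r / ‖w - a‖) := by
    rwa [mem_ball_zero_iff, norm_one, one_lt_div hnorm, ← mem_ball_iff_norm]
  have hslice := eqOn_zero_ball_of_eventually_eq_zero_of_complex (k := k ∘ line)
    (hc.comp (by fun_prop) hline)
    (fun ζ hζ hk => (hd _ (hline hζ) hk).comp ζ (by fun_prop)) (hline0.eventually h0) h1
  simpa only [line, comp_apply, one_smul, add_sub_cancel, Pi.zero_apply] using hslice

lemma frequently_ne_zero_of_differentiable {h : E → F} (hh : Differentiable ℂ h) {p : E}
    (hp : h p ≠ 0) (u : E) : ∃ᶠ x in 𝓝 u, h x ≠ 0 := by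
  intro hzero
  simp only [not_not] at hzero
  exact hp (eqOn_zero_ball_of_eventually_eq_zero (r := dist p u + 1) hh.continuous.continuousOn
    (fun x _ _ => hh x) hzero (mem_ball.2 (lt_add_one _)))

end WeakRado

lemma differentiableAt_intervalIntegral_smul_comp_add {𝕜 E F : Type*} [RCLike 𝕜]
    [NormedAddCommGroup E] [NormedSpace 𝕜 E] [ProperSpace E] [NormedAddCommGroup F]
    [NormedSpace ℝ F] [NormedSpace 𝕜 F] {f : E → F} {U : Set E} (hf : DifferentiableOn 𝕜 f U)
    (hf' : ContinuousOn (fderiv 𝕜 f) U) (hU : IsOpen U) {a b : ℝ} {c : ℝ → 𝕜}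
    (hc : ContinuousOn c (uIcc a b)) {γ : ℝ → E} (hγ : ContinuousOn γ (uIcc a b)) {x : E}
    (hx : ∀ t ∈ uIcc a b, x + γ t ∈ U) :
    DifferentiableAt 𝕜 (fun y => ∫ t in a..b, c t • f (y + γ t)) x := by
  have hpath : ∀ y, ContinuousOn (fun t => y + γ t) (uIcc a b) :=
    fun _ => continuousOn_const.add hγ
  have hcompact : IsCompact ((fun t => x + γ t) '' uIcc a b) :=
    isCompact_uIcc.image_of_continuousOn (hpath x)
  obtain ⟨δ, hδ, hδU⟩ := hcompact.exists_cthickening_subset_open hU (image_subset_iff.2 hx)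
  have hnear : ∀ y ∈ ball x δ, ∀ t ∈ uIcc a b,
      y + γ t ∈ cthickening δ ((fun t => x + γ t) '' uIcc a b) := by
    intro y hy t ht
    refine mem_cthickening_of_dist_le _ (x + γ t) _ _ (mem_image_of_mem _ ht) ?_
    rw [dist_add_right]
    exact (mem_ball.1 hy).le
  have hcomp : ∀ y ∈ ball x δ, ContinuousOn (fun t => c t • f (y + γ t)) (uIcc a b) :=
    fun y hy => hc.smul (hf.continuousOn.comp (hpath y) fun t ht => hδU (hnear y hy t ht))
  have hcomp' : ContinuousOn (fun t => c t • fderiv 𝕜 f (x + γ t)) (uIcc a b) :=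
    hc.smul (hf'.comp (hpath x) hx)
  obtain ⟨M, hM⟩ := hcompact.cthickening.exists_bound_of_continuousOn (hf'.mono hδU)
  refine (intervalIntegral.hasFDerivAt_integral_of_dominated_of_fderiv_le
    (F' := fun y t => c t • fderiv 𝕜 f (y + γ t)) (bound := fun t => ‖c t‖ * M)
    (ball_mem_nhds x hδ) ?_ ?_ ?_ ?_ ?_ ?_).differentiableAt
  · filter_upwards [ball_mem_nhds x hδ] with y hy
    exact (hcomp y hy).intervalIntegrable.aestronglyMeasurable_restrict_uIoc
  · exact (hcomp x (mem_ball_self hδ)).intervalIntegrable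
  · exact hcomp'.intervalIntegrable.aestronglyMeasurable_restrict_uIoc
  · refine Eventually.of_forall fun t ht y hy => ?_
    rw [norm_smul]
    gcongr
    exact hM _ (hnear y hy t (uIoc_subset_uIcc ht))
  · exact (hc.norm.mul continuousOn_const).intervalIntegrable
  · refine Eventually.of_forall fun t ht y hy => ?_
    have hfy := hf.differentiableAt (hU.mem_nhds (hδU (hnear y hy t (uIoc_subset_uIcc ht))))
    exact ((hasFDerivAt_comp_add_right _).2 hfy.hasFDerivAt).const_smul _

section HolomorphicDerivative

variable {E F : Type*} [NormedAddCommGroup E] [NormedSpace ℂ E]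
  [NormedAddCommGroup F] [NormedSpace ℂ F] {f : E → F} {U : Set E}

lemma fderiv_apply_eq_circleIntegral [CompleteSpace F] {x v : E} {R : ℝ} (hR : 0 < R)
    (hf : ∀ ζ ∈ closedBall (0 : ℂ) R, DifferentiableAt ℂ f (x + ζ • v)) :
    fderiv ℂ f x v = (2 * Real.pi * Complex.I : ℂ)⁻¹ •
      ∮ ζ in C(0, R), (1 / ζ ^ 2 : ℂ) • f (x + ζ • v) := by
  have hslice : HasDerivAt (fun ζ : ℂ => f (x + ζ • v)) (fderiv ℂ f x v) 0 := by
    have hx : HasFDerivAt f (fderiv ℂ f x) (x + (0 : ℂ) • v) := by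
      simpa only [zero_smul, add_zero] using (hf 0 (mem_closedBall_self hR.le)).hasFDerivAt
    have hline : HasDerivAt (fun ζ : ℂ => x + ζ • v) v 0 := by
      simpa only [one_smul, id] using ((hasDerivAt_id (0 : ℂ)).smul_const v).const_add x
    exact hx.comp_hasDerivAt (0 : ℂ) hline
  have hd : DifferentiableOn ℂ (fun ζ : ℂ => f (x + ζ • v)) (closedBall 0 R) := fun ζ hζ =>
    ((hf ζ hζ).comp ζ (by fun_prop)).differentiableWithinAt
  rw [← hslice.deriv, eq_inv_smul_iff₀ Complex.two_pi_I_ne_zero,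
    ← hd.deriv_eq_smul_circleIntegral hR]
  simp only [sub_zero]

-- The Schwarz lemma applied to the increment `z ↦ f (z + v) - f z`.
lemma norm_fderiv_add_sub_fderiv_le {x v : E} {r C : ℝ} (hr : 0 < r)
    (hf : ∀ z ∈ ball x r, DifferentiableAt ℂ f z ∧ DifferentiableAt ℂ f (z + v))
    (hC : ∀ z ∈ ball x r, ‖f (z + v) - f z‖ ≤ C) :
    ‖fderiv ℂ f (x + v) - fderiv ℂ f x‖ ≤ (C + C) / r := by
  have htranslate : ∀ z ∈ ball x r, HasFDerivAt (fun z => f (z + v) - f z)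
      (fderiv ℂ f (z + v) - fderiv ℂ f z) z := fun z hz =>
    ((hasFDerivAt_comp_add_right v).2 (hf z hz).2.hasFDerivAt).sub (hf z hz).1.hasFDerivAt
  have hx := mem_ball_self (x := x) hr
  rw [← (htranslate x hx).fderiv]
  exact Complex.norm_fderiv_le_div_of_mapsTo_ball
    (fun z hz => (htranslate z hz).differentiableAt.differentiableWithinAt)
    (fun z hz => mem_closedBall_iff_norm.2 <|
      (norm_sub_le _ _).trans (add_le_add (hC z hz) (hC x hx))) hr

variable [FiniteDimensional ℂ E]

lemma continuousOn_fderiv_of_differentiableOn (hf : DifferentiableOn ℂ f U) (hU : IsOpen U) :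
    ContinuousOn (fderiv ℂ f) U := by
  have : ProperSpace E := FiniteDimensional.proper ℂ E
  intro x hx
  refine ContinuousAt.continuousWithinAt (Metric.continuousAt_iff.2 fun ε hε => ?_)
  obtain ⟨R, hR, hRU⟩ := nhds_basis_closedBall.mem_iff.1 (hU.mem_nhds hx)
  obtain ⟨r, hr, rfl⟩ : ∃ r > 0, R = r + r := ⟨R / 2, half_pos hR, (add_halves R).symm⟩
  obtain ⟨δ, hδ, hfδ⟩ := Metric.uniformContinuousOn_iff.1
    ((isCompact_closedBall x (r + r)).uniformContinuousOn_of_continuous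
      (hf.continuousOn.mono hRU)) (ε / 4 * r) (by positivity)
  refine ⟨min δ r, lt_min hδ hr, fun {y} hy => ?_⟩
  obtain ⟨v, rfl⟩ : ∃ v, y = x + v := ⟨y - x, (add_sub_cancel x y).symm⟩
  rw [dist_self_add_left] at hy
  obtain ⟨hvδ, hvr⟩ := lt_min_iff.1 hy
  have hball : ∀ z ∈ ball x r, z ∈ closedBall x (r + r) ∧ z + v ∈ closedBall x (r + r) := by
    intro z hz
    refine ⟨ball_subset_closedBall (ball_subset_ball (by linarith) hz), ?_⟩
    rw [mem_closedBall_iff_norm, add_sub_right_comm]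
    exact norm_add_le_of_le (mem_ball_iff_norm.1 hz).le hvr.le
  have hdiff : ∀ z ∈ closedBall x (r + r), DifferentiableAt ℂ f z := fun z hz =>
    hf.differentiableAt (hU.mem_nhds (hRU hz))
  have hsmall : ∀ z ∈ ball x r, ‖f (z + v) - f z‖ ≤ ε / 4 * r := by
    intro z hz
    rw [← dist_eq_norm]
    exact (hfδ _ (hball z hz).2 _ (hball z hz).1 (by rwa [dist_self_add_left])).le
  have hfderiv := norm_fderiv_add_sub_fderiv_le hr
    (fun z hz => ⟨hdiff z (hball z hz).1, hdiff _ (hball z hz).2⟩) hsmall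
  rw [← add_mul, mul_div_cancel_right₀ _ hr.ne', ← dist_eq_norm] at hfderiv
  linarith

lemma differentiableAt_circleIntegral_smul_comp_add (hf : DifferentiableOn ℂ f U) (hU : IsOpen U)
    {c : ℂ → ℂ} {R : ℝ} (hR : 0 ≤ R) (hc : ContinuousOn c (sphere 0 R)) {x v : E}
    (hx : ∀ ζ ∈ sphere (0 : ℂ) R, x + ζ • v ∈ U) :
    DifferentiableAt ℂ (fun y => ∮ ζ in C(0, R), c ζ • f (y + ζ • v)) x := by
  have : ProperSpace E := FiniteDimensional.proper ℂ E
  have hcircle : Continuous (circleMap 0 R) := continuous_circleMap 0 R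
  have hcircle_mem : ∀ θ, circleMap 0 R θ ∈ sphere (0 : ℂ) R := circleMap_mem_sphere 0 hR
  have hcoef : Continuous fun θ => deriv (circleMap 0 R) θ * c (circleMap 0 R θ) := by
    simp only [deriv_circleMap]
    exact (hcircle.mul continuous_const).mul (hc.comp_continuous hcircle hcircle_mem)
  simp only [circleIntegral, smul_smul]
  exact differentiableAt_intervalIntegral_smul_comp_add hf
    (continuousOn_fderiv_of_differentiableOn hf hU) hU hcoef.continuousOn
    (hcircle.smul continuous_const).continuousOn fun θ _ => hx _ (hcircle_mem θ)

lemma differentiableOn_fderiv_apply [CompleteSpace F] (hf : DifferentiableOn ℂ f U)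
    (hU : IsOpen U) (v : E) : DifferentiableOn ℂ (fun x => fderiv ℂ f x v) U := by
  intro x hx
  obtain ⟨R, hR, hRU⟩ : ∃ R > 0, ∀ y ∈ ball x R, ∀ ζ ∈ closedBall (0 : ℂ) R, y + ζ • v ∈ U := by
    have hcont : Continuous fun q : E × ℂ => q.1 + q.2 • v := by fun_prop
    have hmem : (fun q : E × ℂ => q.1 + q.2 • v) ⁻¹' U ∈ 𝓝 (x, (0 : ℂ)) :=
      hcont.continuousAt.preimage_mem_nhds (hU.mem_nhds (by simpa using hx))
    obtain ⟨R, hR, hRU⟩ := nhds_basis_closedBall.mem_iff.1 hmem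
    rw [← closedBall_prod_same] at hRU
    exact ⟨R, hR, fun y hy ζ hζ => hRU (mk_mem_prod (ball_subset_closedBall hy) hζ)⟩
  have hcauchy : (fun y => fderiv ℂ f y v) =ᶠ[𝓝 x] fun y => (2 * Real.pi * Complex.I : ℂ)⁻¹ •
      ∮ ζ in C(0, R), (1 / ζ ^ 2 : ℂ) • f (y + ζ • v) := by
    filter_upwards [ball_mem_nhds x hR] with y hy
    exact fderiv_apply_eq_circleIntegral hR fun ζ hζ =>
      hf.differentiableAt (hU.mem_nhds (hRU y hy ζ hζ))
  have hkernel : ContinuousOn (fun ζ : ℂ => 1 / ζ ^ 2) (sphere 0 R) :=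
    continuousOn_const.div (by fun_prop) fun ζ hζ =>
      pow_ne_zero 2 (ne_zero_of_mem_sphere hR.ne' ⟨ζ, hζ⟩)
  refine DifferentiableAt.differentiableWithinAt (DifferentiableAt.congr_of_eventuallyEq
    (DifferentiableAt.const_smul ?_ _) hcauchy)
  exact differentiableAt_circleIntegral_smul_comp_add hf hU hR.le hkernel fun ζ hζ =>
    hRU x (mem_ball_self hR) ζ (sphere_subset_closedBall hζ)

end HolomorphicDerivative

lemma differentiableOn_det {𝕜 E V : Type*} [NontriviallyNormedField 𝕜] [CompleteSpace 𝕜]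
    [NormedAddCommGroup E] [NormedSpace 𝕜 E] [NormedAddCommGroup V] [NormedSpace 𝕜 V]
    [FiniteDimensional 𝕜 V] {A : E → V →L[𝕜] V} {s : Set E}
    (hA : ∀ v, DifferentiableOn 𝕜 (fun x => A x v) s) :
    DifferentiableOn 𝕜 (fun x => (A x).det) s := by
  let b := Module.finBasis 𝕜 V
  have hentry : ∀ i j, DifferentiableOn 𝕜 (fun x => b.repr (A x (b j)) i) s := fun i j =>
    (b.coord i).toContinuousLinearMap.differentiable.comp_differentiableOn (hA (b j))
  have hmatrix : ∀ x, (A x).det = (Matrix.of fun i j => b.repr (A x (b j)) i).det := by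
    intro x
    rw [ContinuousLinearMap.det, ← LinearMap.det_toMatrix b]
    congr 1
    ext i j
    exact LinearMap.toMatrix_apply b b _ i j
  simp only [hmatrix, Matrix.det_apply', Matrix.of_apply]
  exact DifferentiableOn.fun_sum fun σ _ => DifferentiableOn.const_mul
    (fun x hx => (HasFDerivWithinAt.finsetProd fun i _ =>
      (hentry (σ i) i x hx).hasFDerivWithinAt).differentiableWithinAt) _

lemma continuousOn_invFunOn_image {X Y : Type*} [TopologicalSpace X] [Nonempty X]
    [TopologicalSpace Y] [T2Space Y] {f : X → Y} {S : Set X} (hS : IsCompact S)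
    (hf : ContinuousOn f S) (hinj : InjOn f S) : ContinuousOn (invFunOn f S) (f '' S) := by
  rw [continuousOn_iff_isClosed]
  refine fun t ht => ⟨f '' (S ∩ t), ((hS.inter_right ht).image_of_continuousOn
    (hf.mono inter_subset_left)).isClosed, ?_⟩
  ext w
  constructor
  · rintro ⟨hwt, x, hx, rfl⟩
    rw [mem_preimage, hinj.leftInvOn_invFunOn hx] at hwt
    exact ⟨mem_image_of_mem f ⟨hx, hwt⟩, mem_image_of_mem f hx⟩
  · rintro ⟨⟨x, ⟨hx, hxt⟩, rfl⟩, hw⟩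
    exact ⟨by rwa [mem_preimage, hinj.leftInvOn_invFunOn hx], hw⟩

lemma continuousAt_indicator_of_eq_zero {X M : Type*} [TopologicalSpace X] [TopologicalSpace M]
    [Zero M] {C : Set X} {g : X → M} {x : X} (hg : ContinuousWithinAt g C x) (hgx : g x = 0) :
    ContinuousAt (C.indicator g) x := by
  classical
  have hx : C.indicator g x = 0 := indicator_apply_eq_zero.2 fun _ => hgx
  rw [ContinuousAt, hx]
  exact Tendsto.if (hgx ▸ hg) tendsto_const_nhds

section Osgood

variable {E : Type*} [NormedAddCommGroup E] [NormedSpace ℂ E]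

/-- The Jacobian determinant of `f` transported to the target through the inverse of `f` on `S`,
and extended by zero off `f '' S`. It is meaningful when `f` is injective on `S`. It vanishes near
the values at which `f` fails to be open, which is how openness is proved. -/
noncomputable def transportedJacobian (f : E → E) (S : Set E) : E → ℂ :=
  (f '' S).indicator fun w => (fderiv ℂ f (invFunOn f S w)).det

variable {f : E → E} {S U : Set E}

lemma transportedJacobian_apply (hinj : InjOn f S) {x : E} (hx : x ∈ S) :
    transportedJacobian f S (f x) = (fderiv ℂ f x).det := by
  rw [transportedJacobian, indicator_of_mem (mem_image_of_mem f hx), hinj.leftInvOn_invFunOn hx]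

lemma transportedJacobian_eventually_eq_zero (hS : IsCompact S) (hf : ContinuousOn f S) {w : E}
    (hw : w ∉ f '' S) : ∀ᶠ y in 𝓝 w, transportedJacobian f S y = 0 := by
  filter_upwards [(hS.image_of_continuousOn hf).isClosed.isOpen_compl.mem_nhds hw] with y hy
  exact indicator_of_notMem hy _

variable [FiniteDimensional ℂ E]

lemma differentiableOn_det_fderiv (hf : DifferentiableOn ℂ f U) (hU : IsOpen U) :
    DifferentiableOn ℂ (fun x => (fderiv ℂ f x).det) U :=
  have : CompleteSpace E := FiniteDimensional.complete ℂ E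
  differentiableOn_det (differentiableOn_fderiv_apply hf hU)

lemma differentiableAt_transportedJacobian (hf : DifferentiableOn ℂ f U) (hU : IsOpen U)
    (hS : IsCompact S) (hSU : S ⊆ U) (hinj : InjOn f S) {x : E} (hx : x ∈ interior S)
    (hdet : (fderiv ℂ f x).det ≠ 0) :
    DifferentiableAt ℂ (transportedJacobian f S) (f x) := by
  have : CompleteSpace E := FiniteDimensional.complete ℂ E
  have hxS := interior_subset hx
  have hUx := hU.mem_nhds (hSU hxS)
  have hstrict : HasStrictFDerivAt f
      ((fderiv ℂ f x).toContinuousLinearEquivOfDetNeZero hdet : E →L[ℂ] E) x := by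
    rw [ContinuousLinearMap.coe_toContinuousLinearEquivOfDetNeZero]
    refine hasStrictFDerivAt_of_hasFDerivAt_of_continuousAt ?_
      ((continuousOn_fderiv_of_differentiableOn hf hU).continuousAt hUx)
    filter_upwards [hUx] with y hy
    exact (hf.differentiableAt (hU.mem_nhds hy)).hasFDerivAt
  have himage : f '' S ∈ 𝓝 (f x) := by
    rw [← hstrict.map_nhds_eq_of_equiv]
    exact image_mem_map (mem_interior_iff_mem_nhds.1 hx)
  have hinv_cont := continuousOn_invFunOn_image hS (hf.continuousOn.mono hSU) hinj
  have hinv_x : invFunOn f S (f x) = x := hinj.leftInvOn_invFunOn hxS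
  have hinv : DifferentiableAt ℂ (invFunOn f S) (f x) :=
    (HasFDerivAt.of_local_left_inverse (hinv_cont.continuousAt himage)
      (by simpa only [hinv_x] using hstrict.hasFDerivAt)
      (eventually_of_mem himage fun _ => invFunOn_eq)).differentiableAt
  have hjac : DifferentiableAt ℂ (fun y => (fderiv ℂ f y).det) (invFunOn f S (f x)) :=
    hinv_x.symm ▸ (differentiableOn_det_fderiv hf hU).differentiableAt hUx
  refine (hjac.comp (f x) hinv).congr_of_eventuallyEq ?_
  filter_upwards [himage] with y hy
  exact indicator_of_mem hy _

-- At critical values the inverse need not be differentiable, but there the Jacobian tends to zero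
-- and so fits continuously with the extension by zero.
lemma continuousAt_transportedJacobian (hf : DifferentiableOn ℂ f U) (hU : IsOpen U)
    (hS : IsCompact S) (hSU : S ⊆ U) (hinj : InjOn f S) {w : E} (hw : w ∉ f '' frontier S) :
    ContinuousAt (transportedJacobian f S) w := by
  have hfS := hf.continuousOn.mono hSU
  by_cases hwS : w ∈ f '' S
  · obtain ⟨x, hx, rfl⟩ := hwS
    by_cases hdet : (fderiv ℂ f x).det = 0
    · have hinv_x : invFunOn f S (f x) = x := hinj.leftInvOn_invFunOn hx
      have hjac : ContinuousAt (fun y => (fderiv ℂ f y).det) (invFunOn f S (f x)) :=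
        hinv_x.symm ▸ (differentiableOn_det_fderiv hf hU).continuousOn.continuousAt
          (hU.mem_nhds (hSU hx))
      exact continuousAt_indicator_of_eq_zero (hjac.comp_continuousWithinAt
        (continuousOn_invFunOn_image hS hfS hinj (f x) (mem_image_of_mem f hx)))
        (by rwa [hinv_x])
    · have hx_interior : x ∈ interior S := by
        by_contra hx'
        exact hw (mem_image_of_mem f ⟨subset_closure hx, hx'⟩)
      exact (differentiableAt_transportedJacobian hf hU hS hSU hinj hx_interior hdet).continuousAt
  · exact continuousAt_const.congr
      ((transportedJacobian_eventually_eq_zero hS hfS hwS).mono fun _ => Eq.symm)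

lemma transportedJacobian_eventually_eq_zero_of_image_notMem_nhds (hf : DifferentiableOn ℂ f U)
    (hU : IsOpen U) (hS : IsCompact S) (hSU : S ⊆ U) (hinj : InjOn f S) {u : E}
    (hu : u ∈ interior S) (himage : f '' S ∉ 𝓝 (f u)) :
    ∀ᶠ w in 𝓝 (f u), transportedJacobian f S w = 0 := by
  have hfrontier_sub : frontier S ⊆ S := hS.isClosed.frontier_subset
  have hfrontier : f u ∉ f '' frontier S := by
    rintro ⟨x, hx, hxu⟩
    exact hx.2 (hinj (hfrontier_sub hx) (interior_subset hu) hxu ▸ hu)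
  have hfrontier_closed : IsClosed (f '' frontier S) :=
    ((hS.of_isClosed_subset isClosed_frontier hfrontier_sub).image_of_continuousOn
      (hf.continuousOn.mono (hfrontier_sub.trans hSU))).isClosed
  obtain ⟨R, hR, hRS⟩ := Metric.mem_nhds_iff.1 (hfrontier_closed.isOpen_compl.mem_nhds hfrontier)
  obtain ⟨a, haR, haS⟩ : ∃ a ∈ ball (f u) (R / 2), a ∉ f '' S := by
    by_contra! hall
    exact himage (mem_of_superset (ball_mem_nhds _ (half_pos hR)) hall)
  have hball : ball a (R / 2) ⊆ (f '' frontier S)ᶜ :=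
    (ball_subset_ball' (by linarith [mem_ball.1 haR])).trans hRS
  have hdiff : ∀ w ∈ ball a (R / 2), transportedJacobian f S w ≠ 0 →
      DifferentiableAt ℂ (transportedJacobian f S) w := by
    intro w hw hne
    obtain ⟨x, hx, rfl⟩ := mem_of_indicator_ne_zero hne
    rw [transportedJacobian_apply hinj hx] at hne
    refine differentiableAt_transportedJacobian hf hU hS hSU hinj ?_ hne
    by_contra hx'
    exact hball hw (mem_image_of_mem f ⟨subset_closure hx, hx'⟩)
  have hzero := eqOn_zero_ball_of_eventually_eq_zero (fun w hw =>
    (continuousAt_transportedJacobian hf hU hS hSU hinj (hball hw)).continuousWithinAt) hdiff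
    (transportedJacobian_eventually_eq_zero hS (hf.continuousOn.mono hSU) haS)
  exact eventually_of_mem (isOpen_ball.mem_nhds (mem_ball_comm.1 haR)) hzero

theorem nhds_le_map_nhds_of_injOn (hf : DifferentiableOn ℂ f U) (hU : IsOpen U)
    (hinj : InjOn f U) {u : E} (hu : u ∈ U) (hdet : ∃ᶠ x in 𝓝 u, (fderiv ℂ f x).det ≠ 0) :
    𝓝 (f u) ≤ map f (𝓝 u) := by
  have : ProperSpace E := FiniteDimensional.proper ℂ E
  refine le_map fun N hN => ?_
  obtain ⟨r, hr, hrNU⟩ := nhds_basis_closedBall.mem_iff.1 (inter_mem hN (hU.mem_nhds hu))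
  obtain ⟨hrN, hrU⟩ := subset_inter_iff.1 hrNU
  have hinj_r := hinj.mono hrU
  have hball : closedBall u r ∈ 𝓝 u := closedBall_mem_nhds u hr
  refine mem_of_superset ?_ (image_mono hrN)
  by_contra himage
  have hzero := transportedJacobian_eventually_eq_zero_of_image_notMem_nhds hf hU
    (isCompact_closedBall u r) hrU hinj_r (mem_interior_iff_mem_nhds.2 hball) himage
  have hf_cont : ContinuousAt f u := hf.continuousOn.continuousAt (hU.mem_nhds hu)
  obtain ⟨x, hx, hx_ball, hx_zero⟩ :=
    (hdet.and_eventually ((eventually_mem_set.2 hball).and (hf_cont.eventually hzero))).exists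
  exact hx ((transportedJacobian_apply hinj_r hx_ball).symm.trans hx_zero)

end Osgood

section Saturation

variable {X Y : Type*} [TopologicalSpace X] [T2Space X] [TopologicalSpace Y] {f : X → Y}
  {U V : Set X}

lemma isOpen_setOf_two_preimages (hU : IsOpen U) (hV : IsOpen V)
    (hopenU : ∀ x ∈ U, 𝓝 (f x) ≤ map f (𝓝 x)) (hopenV : ∀ x ∈ V, 𝓝 (f x) ≤ map f (𝓝 x)) :
    IsOpen {w | ∃ x ∈ U, ∃ y ∈ V, x ≠ y ∧ f x = w ∧ f y = w} := by
  rw [isOpen_iff_mem_nhds]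
  rintro w ⟨x, hx, y, hy, hxy, rfl, hyx⟩
  obtain ⟨Nx, Ny, hNx, hNy, hxNx, hyNy, hdisj⟩ := t2_separation hxy
  have himage_x : f '' (U ∩ Nx) ∈ 𝓝 (f x) :=
    hopenU x hx (image_mem_map ((hU.inter hNx).mem_nhds ⟨hx, hxNx⟩))
  have himage_y : f '' (V ∩ Ny) ∈ 𝓝 (f x) :=
    hyx ▸ hopenV y hy (image_mem_map ((hV.inter hNy).mem_nhds ⟨hy, hyNy⟩))
  filter_upwards [himage_x, himage_y]
  rintro _ ⟨x', ⟨hx'U, hx'N⟩, rfl⟩ ⟨y', ⟨hy'V, hy'N⟩, hy'x'⟩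
  exact ⟨x', hx'U, y', hy'V, hdisj.ne_of_mem hx'N hy'N, rfl, hy'x'⟩

-- On `f '' U ∩ f '' V` the values whose two preimages coincide and those whose two preimages differ
-- form disjoint open sets, and the first of them is nonempty.
lemma injOn_union_of_isPreconnected_inter_image (hU : IsOpen U) (hV : IsOpen V)
    (hUV : (U ∩ V).Nonempty) (hinjU : InjOn f U) (hinjV : InjOn f V)
    (hopenU : ∀ x ∈ U, 𝓝 (f x) ≤ map f (𝓝 x)) (hopenV : ∀ x ∈ V, 𝓝 (f x) ≤ map f (𝓝 x))
    (hconn : IsPreconnected (f '' U ∩ f '' V)) : InjOn f (U ∪ V) := by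
  have hcross : ∀ u ∈ U, ∀ v ∈ V, f u = f v → u = v := by
    intro u hu v hv huv
    by_contra hne
    have hagree_open : IsOpen (f '' (U ∩ V)) := by
      rw [isOpen_iff_mem_nhds]
      rintro _ ⟨x, hx, rfl⟩
      exact hopenU x hx.1 (image_mem_map ((hU.inter hV).mem_nhds hx))
    have hcover : f '' U ∩ f '' V ⊆
        f '' (U ∩ V) ∪ {w | ∃ x ∈ U, ∃ y ∈ V, x ≠ y ∧ f x = w ∧ f y = w} := by
      rintro w ⟨⟨x, hx, hxw⟩, y, hy, hyw⟩
      rcases eq_or_ne x y with rfl | hxy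
      · exact .inl ⟨x, ⟨hx, hy⟩, hxw⟩
      · exact .inr ⟨x, hx, y, hy, hxy, hxw, hyw⟩
    obtain ⟨q, hqU, hqV⟩ := hUV
    obtain ⟨w, -, ⟨z, ⟨hzU, hzV⟩, rfl⟩, x, hx, y, hy, hxy, hxz, hyz⟩ :=
      hconn _ _ hagree_open (isOpen_setOf_two_preimages hU hV hopenU hopenV) hcover
        ⟨f q, ⟨mem_image_of_mem f hqU, mem_image_of_mem f hqV⟩, mem_image_of_mem f ⟨hqU, hqV⟩⟩
        ⟨f u, ⟨mem_image_of_mem f hu, v, hv, huv.symm⟩, u, hu, v, hv, hne, rfl, huv.symm⟩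
    exact hxy ((hinjU hx hzU hxz).trans (hinjV hy hzV hyz).symm)
  rintro x (hxU | hxV) y (hyU | hyV) hxy
  · exact hinjU hxU hyU hxy
  · exact hcross x hxU y hyV hxy
  · exact (hcross y hyU x hxV hxy.symm).symm
  · exact hinjV hxV hyV hxy

lemma injOn_saturation_of_nhds_le_map_nhds {G : Type*} [Group G] (φ : G →* (X ≃ₜ X))
    {ψ : G → Y → Y} (hψ : ∀ g, Semiconj f (φ g) (ψ g)) {p : X} (hp : ∀ g, φ g p = p)
    (hU : IsOpen U) (hpU : p ∈ U) (hinj : InjOn f U)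
    (hopen : ∀ V, IsOpen V → InjOn f V → ∀ x ∈ V, 𝓝 (f x) ≤ map f (𝓝 x))
    (hconn : ∀ g, IsPreconnected (ψ g '' (f '' U) ∩ f '' U)) :
    InjOn f {y | ∃ g, φ g y ∈ U} := by
  have hinv_apply : ∀ g x, φ g⁻¹ (φ g x) = x := fun g x => by
    rw [← Homeomorph.mul_apply, ← map_mul, inv_mul_cancel, map_one, Homeomorph.one_apply]
  have hinj_translate : ∀ g, InjOn f (φ g '' U) := by
    rintro g _ ⟨x, hx, rfl⟩ _ ⟨y, hy, rfl⟩ hxy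
    rw [hinj hx hy]
    simpa only [← (hψ g⁻¹).eq, hinv_apply] using congrArg (ψ g⁻¹) hxy
  rintro x ⟨a, hx⟩ y ⟨b, hy⟩ hxy
  let V := φ (b * a⁻¹) '' U
  have hVopen : IsOpen V := (φ (b * a⁻¹)).isOpen_image.2 hU
  have hV_image : f '' V = ψ (b * a⁻¹) '' (f '' U) := (hψ (b * a⁻¹)).set_image U
  have hunion : InjOn f (V ∪ U) :=
    injOn_union_of_isPreconnected_inter_image hVopen hU ⟨p, ⟨p, hpU, hp _⟩, hpU⟩
      (hinj_translate _) hinj (hopen V hVopen (hinj_translate _)) (hopen U hU hinj)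
      (hV_image ▸ hconn _)
  have hxV : φ b x ∈ V := ⟨φ a x, hx, by
    rw [map_mul, Homeomorph.mul_apply, hinv_apply]⟩
  exact (φ b).injective (hunion (.inl hxV) (.inr hy) (by rw [hψ b x, hψ b y, hxy]))

end Saturation

/-- The action by homeomorphisms of the units of a group with zero on a space, obtained from a
family of self-maps `φ z` constrained only for `z ≠ 0`, as `ℂ*`-actions are encoded here.
A homomorphism is used instead of a `MulAction` because `ℂˣ` already acts on complex vector spaces
by scalars. -/
def unitsActionHom {G₀ X : Type*} [GroupWithZero G₀] [TopologicalSpace X] {φ : G₀ → X → X}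
    (hcont : ∀ z, z ≠ 0 → Continuous (φ z)) (hone : φ 1 = id)
    (hmul : ∀ z w, z ≠ 0 → w ≠ 0 → φ (z * w) = φ z ∘ φ w) : G₀ˣ →* (X ≃ₜ X) where
  toFun z :=
    { toFun := φ z
      invFun := φ ↑z⁻¹
      left_inv := fun x => by
        rw [← comp_apply (f := φ _), ← hmul _ _ z⁻¹.ne_zero z.ne_zero, Units.inv_mul, hone, id]
      right_inv := fun x => by
        rw [← comp_apply (f := φ _), ← hmul _ _ z.ne_zero z⁻¹.ne_zero, Units.mul_inv, hone, id]
      continuous_toFun := hcont z z.ne_zero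
      continuous_invFun := hcont _ z⁻¹.ne_zero }
  map_one' := Homeomorph.ext fun x => congrFun hone x
  map_mul' z w := Homeomorph.ext fun x => congrFun (hmul z w z.ne_zero w.ne_zero) x

theorem injective_on_saturation_general {E G : Type*} [NormedAddCommGroup E] [NormedSpace ℂ E]
    [FiniteDimensional ℂ E] [Group G] (φ : G →* (E ≃ₜ E)) {ψ : G → E → E} {p : E}
    (hp : ∀ g, φ g p = p) {F : E → E} (hF : Differentiable ℂ F)
    (hψ : ∀ g, Semiconj F (φ g) (ψ g)) (hdet : (fderiv ℂ F p).det ≠ 0) {U : Set E}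
    (hU : IsOpen U) (hpU : p ∈ U) (hinj : InjOn F U)
    (hconn : ∀ g, IsPreconnected (ψ g '' (F '' U) ∩ F '' U)) :
    InjOn F {y | ∃ g, φ g y ∈ U} := by
  have hdet_diff : Differentiable ℂ fun x => (fderiv ℂ F x).det :=
    differentiableOn_univ.1 (differentiableOn_det_fderiv hF.differentiableOn isOpen_univ)
  exact injOn_saturation_of_nhds_le_map_nhds φ hψ hp hU hpU hinj
    (fun V hV hinjV x hx => nhds_le_map_nhds_of_injOn hF.differentiableOn hV hinjV hx
      (frequently_ne_zero_of_differentiable hdet_diff hdet x)) hconn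

/-- **Lemma 2.2.** Let `φ` be a holomorphic `ℂ*`-action on `ℂⁿ` fixing `p`, with
linearized action `ψ_pᶻ = D(φᶻ)(p)` at `p`, and let `F_p : ℂⁿ → ℂⁿ` be a holomorphic
map satisfying `ψ_pᶻ ∘ F_p = F_p ∘ φᶻ` for all `z ∈ ℂ*`, `F_p p = 0` and `D F_p (p) = Id`.
If `U ∋ p` is open, `V = F_p '' U` is open, `F_p` is injective on `U`, and
`ψ_pᶻ(V) ∩ V` is connected for every `z ∈ ℂ*`, then `F_p` is injective on the
saturation `Sat(U, φ)` of `U` by the orbits of `φ`. -/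
theorem injective_on_saturation
    {n : ℕ} (φ : ℂ → EuclideanSpace ℂ (Fin n) → EuclideanSpace ℂ (Fin n))
    (p : EuclideanSpace ℂ (Fin n))
    (hφ_hol : DifferentiableOn ℂ
      (fun q : ℂ × EuclideanSpace ℂ (Fin n) => φ q.1 q.2)
      ({z : ℂ | z ≠ 0} ×ˢ (Set.univ : Set (EuclideanSpace ℂ (Fin n)))))
    (hφ_one : φ 1 = id)
    (hφ_mul : ∀ z w : ℂ, z ≠ 0 → w ≠ 0 → φ (z * w) = φ z ∘ φ w)
    (hp : ∀ z : ℂ, z ≠ 0 → φ z p = p)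
    (F : EuclideanSpace ℂ (Fin n) → EuclideanSpace ℂ (Fin n))
    (hF_hol : Differentiable ℂ F)
    (hF_conj : ∀ z : ℂ, z ≠ 0 → ∀ x, fderiv ℂ (φ z) p (F x) = F (φ z x))
    (hF_p : F p = 0)
    (hF_deriv : fderiv ℂ F p = ContinuousLinearMap.id ℂ (EuclideanSpace ℂ (Fin n)))
    (U : Set (EuclideanSpace ℂ (Fin n))) (hU : IsOpen U) (hpU : p ∈ U)
    (hV : IsOpen (F '' U))
    (hinj : Set.InjOn F U)
    (hconn : ∀ z : ℂ, z ≠ 0 →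
      IsConnected ((fderiv ℂ (φ z) p) '' (F '' U) ∩ (F '' U))) :
    Set.InjOn F {y | ∃ z : ℂ, z ≠ 0 ∧ φ z y ∈ U} := by
  have hφ_cont : ∀ z : ℂ, z ≠ 0 → Continuous (φ z) := fun z hz =>
    hφ_hol.continuousOn.comp_continuous (f := fun x => (z, x)) (by fun_prop)
      fun _ => ⟨hz, trivial⟩
  have hdet : (fderiv ℂ F p).det ≠ 0 := by simp [hF_deriv, ContinuousLinearMap.det]
  refine (injective_on_saturation_general (unitsActionHom hφ_cont hφ_one hφ_mul)
    (ψ := fun z => fderiv ℂ (φ z) p) (fun z => hp z z.ne_zero) hF_hol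
    (fun z x => (hF_conj z z.ne_zero x).symm) hdet hU hpU hinj
    (fun z => (hconn z z.ne_zero).isPreconnected)).mono ?_
  rintro y ⟨z, hz, hy⟩
  exact ⟨Units.mk0 z hz, hy⟩
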